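/- For every x ∈ 𝔽_p*, the degree of the vertex x·u in Γ(R) equals p² − 2, the degree of the vertex x·v equals p² − 2, and the degree of the vertex x·uv equals p³ − 2. -/

import Mathlib

/- `Rng p` models the ring `R = 𝔽_p[u,v]/⟨u², v², uv - vu⟩`:
every element is uniquely `a + b·u + c·v + d·uv` with `a b c d : ZMod p`. -/
set_option synthInstance.maxHeartbeats 1000000
set_option maxHeartbeats 1000000

abbrev Rng (p : ℕ) : Type := DualNumber (DualNumber (ZMod p))

/-- The element `u` of `R` (satisfies `u² = 0`). -/
def uu (p : ℕ) : Rng p := TrivSqZeroExt.inl DualNumber.eps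

/-- The element `v` of `R` (satisfies `v² = 0`). -/
def vv (p : ℕ) : Rng p := DualNumber.eps

/-- The vertex set `Z*(R)`: nonzero zero-divisors of `R`. -/
abbrev Vtx (p : ℕ) : Type := {x : Rng p // x ≠ 0 ∧ ∃ y : Rng p, y ≠ 0 ∧ x * y = 0}

/-- The zero-divisor graph `Γ(R)`. -/
def ZDG (p : ℕ) : SimpleGraph (Vtx p) where
  Adj a b := a ≠ b ∧ (a : Rng p) * (b : Rng p) = 0
  symm := ⟨fun a b h => ⟨h.1.symm, (mul_comm (b : Rng p) (a : Rng p)).trans h.2⟩⟩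
  loopless := ⟨fun a h => h.1 rfl⟩

instance (p : ℕ) : DecidableEq (Rng p) :=
  inferInstanceAs (DecidableEq ((ZMod p × ZMod p) × ZMod p × ZMod p))

instance (p : ℕ) [NeZero p] : Fintype (Rng p) :=
  inferInstanceAs (Fintype ((ZMod p × ZMod p) × ZMod p × ZMod p))

instance (p : ℕ) : DecidableRel (ZDG p).Adj :=
  fun a b => inferInstanceAs (Decidable (a ≠ b ∧ (a : Rng p) * (b : Rng p) = 0))

theorem degree_aux (p : ℕ) [Fact p.Prime] (a : Vtx p) (h : (a : Rng p) * (a : Rng p) = 0)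
    {T : Type} [Fintype T] (f : T → Rng p) (hf : Function.Injective f)
    (hr : ∀ y : Rng p, (a : Rng p) * y = 0 ↔ ∃ t, f t = y) :
    (ZDG p).degree a = Fintype.card T - 2 := by
  classical
  have h1 : ((ZDG p).neighborFinset a).map (Function.Embedding.subtype _)
      = (Finset.univ.map ⟨f, hf⟩) \ {0, (a : Rng p)} := by
    ext y
    simp only [Finset.mem_map, SimpleGraph.mem_neighborFinset, Finset.mem_sdiff, Finset.mem_univ,
      true_and, Function.Embedding.coeFn_mk, Finset.mem_insert, Finset.mem_singleton, ← hr,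
      Function.Embedding.subtype_apply]
    constructor
    · rintro ⟨b, hb, rfl⟩
      refine ⟨hb.2, ?_⟩
      rintro (h0 | h0)
      · exact b.2.1 h0
      · exact hb.1 (Subtype.ext h0.symm)
    · rintro ⟨hy, hn⟩
      push Not at hn
      refine ⟨⟨y, hn.1, a, a.2.1, (mul_comm y (a : Rng p)).trans hy⟩, ⟨?_, hy⟩, rfl⟩
      intro he
      exact hn.2 (congrArg Subtype.val he).symm
  have h2 : ({0, (a : Rng p)} : Finset (Rng p)) ⊆ Finset.univ.map ⟨f, hf⟩ := by
    intro y hy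
    simp only [Finset.mem_map, Finset.mem_univ, true_and, Function.Embedding.coeFn_mk, ← hr]
    simp only [Finset.mem_insert, Finset.mem_singleton] at hy
    rcases hy with rfl | rfl
    · exact mul_zero _
    · exact h
  rw [← SimpleGraph.card_neighborFinset_eq_degree, ← Finset.card_map, h1,
    Finset.card_sdiff_of_subset h2, Finset.card_map, Finset.card_pair (Ne.symm a.2.1), Finset.card_univ]

/-- The element `a + b u + c v + d uv`. -/
def mk4 {p : ℕ} (a b c d : ZMod p) : Rng p := ((a, b), (c, d))

theorem mk4_surj {p : ℕ} (y : Rng p) : ∃ a b c d, y = mk4 a b c d :=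
  ⟨y.1.1, y.1.2, y.2.1, y.2.2, rfl⟩

theorem mk4_inj {p : ℕ} {a b c d a' b' c' d' : ZMod p} :
    mk4 a b c d = mk4 a' b' c' d' ↔ a = a' ∧ b = b' ∧ c = c' ∧ d = d' := by
  constructor
  · intro h
    exact ⟨congrArg (fun y : Rng p => y.1.1) h, congrArg (fun y : Rng p => y.1.2) h,
      congrArg (fun y : Rng p => y.2.1) h, congrArg (fun y : Rng p => y.2.2) h⟩
  · rintro ⟨rfl, rfl, rfl, rfl⟩
    rfl

theorem mk4_zero {p : ℕ} : (0 : Rng p) = mk4 0 0 0 0 := rfl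

theorem mk4_mul {p : ℕ} (a b c d a' b' c' d' : ZMod p) :
    mk4 a b c d * mk4 a' b' c' d' =
      mk4 (a * a') (a * b' + a' * b) (a * c' + a' * c) (a * d' + c' * b + (a' * d + c * b')) := by
  have h : mk4 a b c d * mk4 a' b' c' d' =
      mk4 (a * a') (a * b' + b * a') (a * c' + c * a') ((a * d' + b * c') + (c * b' + d * a')) := rfl
  rw [h, mk4_inj]
  refine ⟨rfl, ?_, ?_, ?_⟩ <;> ring

theorem uu_eq {p : ℕ} (x : ZMod p) : x • uu p = mk4 0 x 0 0 := by
  refine TrivSqZeroExt.ext (TrivSqZeroExt.ext ?_ ?_) (TrivSqZeroExt.ext ?_ ?_) <;>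
    simp [mk4, uu] <;> simp [TrivSqZeroExt.fst, TrivSqZeroExt.snd]

theorem vv_eq {p : ℕ} (x : ZMod p) : x • vv p = mk4 0 0 x 0 := by
  refine TrivSqZeroExt.ext (TrivSqZeroExt.ext ?_ ?_) (TrivSqZeroExt.ext ?_ ?_) <;>
    simp [mk4, vv] <;> simp [TrivSqZeroExt.fst, TrivSqZeroExt.snd]

theorem uv_eq {p : ℕ} (x : ZMod p) : x • (uu p * vv p) = mk4 0 0 0 x := by
  refine TrivSqZeroExt.ext (TrivSqZeroExt.ext ?_ ?_) (TrivSqZeroExt.ext ?_ ?_) <;>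
    simp [mk4, uu, vv] <;> simp [TrivSqZeroExt.fst, TrivSqZeroExt.snd]

theorem stmt17 (p : ℕ) [Fact p.Prime] (hodd : Odd p) :
    (∀ a : Vtx p, (∃ x : ZMod p, x ≠ 0 ∧ (a : Rng p) = x • uu p) →
        (ZDG p).degree a = p ^ 2 - 2) ∧
      (∀ a : Vtx p, (∃ x : ZMod p, x ≠ 0 ∧ (a : Rng p) = x • vv p) →
        (ZDG p).degree a = p ^ 2 - 2) ∧
      (∀ a : Vtx p, (∃ x : ZMod p, x ≠ 0 ∧ (a : Rng p) = x • (uu p * vv p)) →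
        (ZDG p).degree a = p ^ 3 - 2) := by
  refine ⟨?_, ?_, ?_⟩
  · rintro a ⟨x, hx, ha⟩
    rw [uu_eq] at ha
    rw [degree_aux p a (by rw [ha, mk4_mul, mk4_zero, mk4_inj]; simp)
      (fun t : ZMod p × ZMod p => mk4 0 t.1 0 t.2)
      (by
        rintro ⟨b, d⟩ ⟨b', d'⟩ h
        simpa [mk4_inj] using h)
      (by
        intro y
        obtain ⟨b, c, d, e, rfl⟩ := mk4_surj y
        rw [ha, mk4_mul, mk4_zero, mk4_inj]
        simp [mk4_inj, hx, eq_comm])]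
    simp [ZMod.card, sq]
  · rintro a ⟨x, hx, ha⟩
    rw [vv_eq] at ha
    rw [degree_aux p a (by rw [ha, mk4_mul, mk4_zero, mk4_inj]; simp)
      (fun t : ZMod p × ZMod p => mk4 0 0 t.1 t.2)
      (by
        rintro ⟨b, d⟩ ⟨b', d'⟩ h
        simpa [mk4_inj] using h)
      (by
        intro y
        obtain ⟨b, c, d, e, rfl⟩ := mk4_surj y
        rw [ha, mk4_mul, mk4_zero, mk4_inj]
        simp [mk4_inj, hx, eq_comm])]
    simp [ZMod.card, sq]
  · rintro a ⟨x, hx, ha⟩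
    rw [uv_eq] at ha
    rw [degree_aux p a (by rw [ha, mk4_mul, mk4_zero, mk4_inj]; simp)
      (fun t : ZMod p × ZMod p × ZMod p => mk4 0 t.1 t.2.1 t.2.2)
      (by
        rintro ⟨b, d, e⟩ ⟨b', d', e'⟩ h
        simpa [mk4_inj] using h)
      (by
        intro y
        obtain ⟨b, c, d, e, rfl⟩ := mk4_surj y
        rw [ha, mk4_mul, mk4_zero, mk4_inj]
        simp [mk4_inj, hx, eq_comm])]
    simp [ZMod.card, pow_succ, mul_assoc]
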